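/- Let τ₁, τ₂ : ℝ² → ℝ (coordinates (x,y)) be smooth and everywhere positive, and suppose they satisfy the bilinear Bäcklund relation τ₁∂_x²τ₂ − 2(∂_xτ₁)(∂_xτ₂) + τ₂∂_x²τ₁ + τ₂∂_yτ₁ − τ₁∂_yτ₂ = 0. Set wᵢ := 2∂_x log τᵢ (i = 1,2). Then ∂_x(2∂_yτᵢ/τᵢ) = ∂_y wᵢ for i = 1,2, and 2(∂_yτ₂/τ₂ − ∂_yτ₁/τ₁) = ∂_x(w₂ + w₁) + (1/2)(w₂ − w₁)². -/

import Mathlib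

/-!
With `wᵢ = 2 ∂ₓ log τᵢ`, the Riccati relation `∂ₓ wᵢ = 2 ∂ₓ²τᵢ / τᵢ - wᵢ² / 2` removes the second
derivatives: after division by `τ₁ τ₂`, the bilinear relation involves only `∂ₓ wᵢ`, `wᵢ² / 2`,
`w₁ w₂` and `∂_y τᵢ / τᵢ`, and the quadratic terms assemble into `(w₂ - w₁)² / 2`. The formula for
the antiderivative is the symmetry of the second derivatives of `log τ`.
-/

noncomputable def pX (f : ℝ → ℝ → ℝ) : ℝ → ℝ → ℝ :=
  fun x y => deriv (fun s => f s y) x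

noncomputable def pY (f : ℝ → ℝ → ℝ) : ℝ → ℝ → ℝ :=
  fun x y => deriv (fun s => f x s) y

open Filter Function Topology

theorem hasFDerivAt_fderiv_apply {𝕜 E F : Type*} [NontriviallyNormedField 𝕜]
    [NormedAddCommGroup E] [NormedSpace 𝕜 E] [NormedAddCommGroup F] [NormedSpace 𝕜 F]
    {g : E → F} {p : E} (hg : ContDiffAt 𝕜 2 g p) (v : E) :
    HasFDerivAt (fun q => fderiv 𝕜 g q v) ((fderiv 𝕜 (fderiv 𝕜 g) p).flip v) p := by
  have hfderiv : DifferentiableAt 𝕜 (fderiv 𝕜 g) p :=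
    (hg.fderiv_right one_add_one_eq_two.le).differentiableAt one_ne_zero
  simpa using hfderiv.hasFDerivAt.clm_apply (hasFDerivAt_const v p)

section PartialDerivatives

variable {f : ℝ → ℝ → ℝ} {x y : ℝ}

theorem pX_const_mul (c : ℝ) : pX (fun a b => c * f a b) x y = c * pX f x y :=
  deriv_const_mul_field c

theorem pY_const_mul (c : ℝ) : pY (fun a b => c * f a b) x y = c * pY f x y :=
  deriv_const_mul_field c

theorem pX_log (hf : DifferentiableAt ℝ (fun s => f s y) x) (hne : f x y ≠ 0) :
    pX (fun a b => Real.log (f a b)) x y = pX f x y / f x y :=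
  deriv.log hf hne

theorem pY_log (hf : DifferentiableAt ℝ (f x) y) (hne : f x y ≠ 0) :
    pY (fun a b => Real.log (f a b)) x y = pY f x y / f x y :=
  deriv.log hf hne

theorem pX_eq_of_hasFDerivAt {f' : ℝ × ℝ →L[ℝ] ℝ} (hf : HasFDerivAt (uncurry f) f' (x, y)) :
    pX f x y = f' (1, 0) :=
  (hf.comp_hasDerivAt (f := fun s => (s, y)) x
    ((hasDerivAt_id x).prodMk (hasDerivAt_const x y))).deriv

theorem pY_eq_of_hasFDerivAt {f' : ℝ × ℝ →L[ℝ] ℝ} (hf : HasFDerivAt (uncurry f) f' (x, y)) :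
    pY f x y = f' (0, 1) :=
  (hf.comp_hasDerivAt (f := fun s => (x, s)) y
    ((hasDerivAt_const y x).prodMk (hasDerivAt_id y))).deriv

theorem hasFDerivAt_pX (hf : ContDiffAt ℝ 2 (uncurry f) (x, y)) :
    HasFDerivAt (uncurry (pX f)) ((fderiv ℝ (fderiv ℝ (uncurry f)) (x, y)).flip (1, 0)) (x, y) := by
  have hpX : uncurry (pX f) =ᶠ[𝓝 (x, y)] fun p => fderiv ℝ (uncurry f) p (1, 0) := by
    filter_upwards [hf.eventually (by simp)] with p hp
    exact pX_eq_of_hasFDerivAt (hp.differentiableAt two_ne_zero).hasFDerivAt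
  exact (hasFDerivAt_fderiv_apply hf (1, 0)).congr_of_eventuallyEq hpX

theorem hasFDerivAt_pY (hf : ContDiffAt ℝ 2 (uncurry f) (x, y)) :
    HasFDerivAt (uncurry (pY f)) ((fderiv ℝ (fderiv ℝ (uncurry f)) (x, y)).flip (0, 1)) (x, y) := by
  have hpY : uncurry (pY f) =ᶠ[𝓝 (x, y)] fun p => fderiv ℝ (uncurry f) p (0, 1) := by
    filter_upwards [hf.eventually (by simp)] with p hp
    exact pY_eq_of_hasFDerivAt (hp.differentiableAt two_ne_zero).hasFDerivAt
  exact (hasFDerivAt_fderiv_apply hf (0, 1)).congr_of_eventuallyEq hpY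

theorem pX_pY_comm (hf : ContDiffAt ℝ 2 (uncurry f) (x, y)) :
    pX (pY f) x y = pY (pX f) x y := by
  have hsymm : IsSymmSndFDerivAt ℝ (uncurry f) (x, y) := hf.isSymmSndFDerivAt (by simp)
  rw [pX_eq_of_hasFDerivAt (hasFDerivAt_pY hf), pY_eq_of_hasFDerivAt (hasFDerivAt_pX hf)]
  exact hsymm (1, 0) (0, 1)

end PartialDerivatives

section Potential

/-- The potential `w = 2 ∂ₓ log τ` attached to a τ-function of KP-II. Where `τ` is negative,
`Real.log (τ x y)` is `log |τ x y|`, so `w = 2 ∂ₓτ / τ` there as well. -/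
noncomputable def tauPotential (τ : ℝ → ℝ → ℝ) : ℝ → ℝ → ℝ :=
  fun x y => 2 * pX (fun a b => Real.log (τ a b)) x y

variable {τ τ₁ τ₂ : ℝ → ℝ → ℝ} {x y : ℝ}

theorem tauPotential_eq (hτ : DifferentiableAt ℝ (fun s => τ s y) x) (hne : τ x y ≠ 0) :
    tauPotential τ x y = 2 * (pX τ x y / τ x y) :=
  congrArg (2 * ·) (pX_log hτ hne)

theorem hasDerivAt_tauPotential (hτ : ContDiffAt ℝ 2 (fun s => τ s y) x) (hne : τ x y ≠ 0) :
    HasDerivAt (fun s => tauPotential τ s y)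
      (2 * (pX (pX τ) x y / τ x y) - tauPotential τ x y ^ 2 / 2) x := by
  have hτ' : HasDerivAt (fun s => τ s y) (pX τ x y) x :=
    (hτ.differentiableAt two_ne_zero).hasDerivAt
  have hτ'' : HasDerivAt (fun s => pX τ s y) (pX (pX τ) x y) x :=
    ((hτ.derivWithin one_add_one_eq_two.le).differentiableAt one_ne_zero).hasDerivAt
  have hw : (fun s => tauPotential τ s y) =ᶠ[𝓝 x] fun s => 2 * (pX τ s y / τ s y) := by
    filter_upwards [hτ.eventually (by simp), hτ.continuousAt.eventually_ne hne] with s hs hs0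
    exact tauPotential_eq (hs.differentiableAt two_ne_zero) hs0
  refine (((hτ''.div hτ' hne).const_mul 2).congr_of_eventuallyEq hw).congr_deriv ?_
  rw [tauPotential_eq hτ'.differentiableAt hne]
  field_simp

theorem pX_two_mul_pY_div (hτ : ContDiffAt ℝ 2 (uncurry τ) (x, y)) (hne : τ x y ≠ 0) :
    pX (fun a b => 2 * pY τ a b / τ a b) x y = pY (tauPotential τ) x y := by
  have hnear : ∀ᶠ s in 𝓝 x, ContDiffAt ℝ 2 (uncurry τ) (s, y) ∧ τ s y ≠ 0 :=
    (Continuous.prodMk_left y).continuousAt.eventually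
      ((hτ.eventually (by simp)).and (hτ.continuousAt.eventually_ne hne))
  have hlog : (fun s => 2 * pY τ s y / τ s y)
      =ᶠ[𝓝 x] fun s => 2 * pY (fun a b => Real.log (τ a b)) s y := by
    filter_upwards [hnear] with s ⟨hs, hs0⟩
    have hslice : DifferentiableAt ℝ (τ s) y :=
      (hs.differentiableAt two_ne_zero).comp (f := fun t => (s, t)) y (by fun_prop)
    rw [pY_log hslice hs0, mul_div_assoc]
  calc pX (fun a b => 2 * pY τ a b / τ a b) x y
      = pX (fun a b => 2 * pY (fun c d => Real.log (τ c d)) a b) x y := hlog.deriv_eq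
    _ = 2 * pX (pY fun c d => Real.log (τ c d)) x y := pX_const_mul 2
    _ = 2 * pY (pX fun c d => Real.log (τ c d)) x y := congrArg (2 * ·) (pX_pY_comm (hτ.log hne))
    _ = pY (tauPotential τ) x y := (pY_const_mul 2).symm

theorem potential_backlund_of_bilinear
    (hτ₁ : ContDiffAt ℝ 2 (fun s => τ₁ s y) x) (hτ₂ : ContDiffAt ℝ 2 (fun s => τ₂ s y) x)
    (hne₁ : τ₁ x y ≠ 0) (hne₂ : τ₂ x y ≠ 0)
    (hBT : τ₁ x y * pX (pX τ₂) x y - 2 * pX τ₁ x y * pX τ₂ x y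
        + τ₂ x y * pX (pX τ₁) x y + τ₂ x y * pY τ₁ x y - τ₁ x y * pY τ₂ x y = 0) :
    2 * (pY τ₂ x y / τ₂ x y - pY τ₁ x y / τ₁ x y)
      = pX (fun a b => tauPotential τ₂ a b + tauPotential τ₁ a b) x y
        + (1 / 2) * (tauPotential τ₂ x y - tauPotential τ₁ x y) ^ 2 := by
  have hsum : pX (fun a b => tauPotential τ₂ a b + tauPotential τ₁ a b) x y
      = (2 * (pX (pX τ₂) x y / τ₂ x y) - tauPotential τ₂ x y ^ 2 / 2)
        + (2 * (pX (pX τ₁) x y / τ₁ x y) - tauPotential τ₁ x y ^ 2 / 2) :=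
    ((hasDerivAt_tauPotential hτ₂ hne₂).add (hasDerivAt_tauPotential hτ₁ hne₁)).deriv
  have hprod : tauPotential τ₁ x y * tauPotential τ₂ x y
      = 4 * (pX τ₁ x y * pX τ₂ x y) / (τ₁ x y * τ₂ x y) := by
    rw [tauPotential_eq (hτ₁.differentiableAt two_ne_zero) hne₁,
      tauPotential_eq (hτ₂.differentiableAt two_ne_zero) hne₂]
    ring
  have hdiv : 2 * (pY τ₂ x y / τ₂ x y - pY τ₁ x y / τ₁ x y)
      = 2 * (pX (pX τ₂) x y / τ₂ x y) + 2 * (pX (pX τ₁) x y / τ₁ x y)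
        - 4 * (pX τ₁ x y * pX τ₂ x y) / (τ₁ x y * τ₂ x y) := by
    field_simp
    linear_combination -2 * hBT
  rw [hsum]
  linear_combination hdiv + hprod

end Potential

theorem bilinear_backlund_gives_potential_backlund_general {τ₁ τ₂ : ℝ → ℝ → ℝ} {x y : ℝ}
    (hτ₁ : ContDiffAt ℝ 2 (uncurry τ₁) (x, y)) (hτ₂ : ContDiffAt ℝ 2 (uncurry τ₂) (x, y))
    (hne₁ : τ₁ x y ≠ 0) (hne₂ : τ₂ x y ≠ 0)
    (hBT : τ₁ x y * pX (pX τ₂) x y - 2 * pX τ₁ x y * pX τ₂ x y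
        + τ₂ x y * pX (pX τ₁) x y + τ₂ x y * pY τ₁ x y - τ₁ x y * pY τ₂ x y = 0) :
    pX (fun a b => 2 * pY τ₁ a b / τ₁ a b) x y = pY (tauPotential τ₁) x y
    ∧ pX (fun a b => 2 * pY τ₂ a b / τ₂ a b) x y = pY (tauPotential τ₂) x y
    ∧ 2 * (pY τ₂ x y / τ₂ x y - pY τ₁ x y / τ₁ x y)
        = pX (fun a b => tauPotential τ₂ a b + tauPotential τ₁ a b) x y
          + (1 / 2) * (tauPotential τ₂ x y - tauPotential τ₁ x y) ^ 2 := by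
  have hslice : ContDiffAt ℝ 2 (fun s => (s, y)) x := by fun_prop
  exact ⟨pX_two_mul_pY_div hτ₁ hne₁, pX_two_mul_pY_div hτ₂ hne₂,
    potential_backlund_of_bilinear (hτ₁.comp (f := fun s => (s, y)) x hslice)
      (hτ₂.comp (f := fun s => (s, y)) x hslice) hne₁ hne₂ hBT⟩

/-- the bilinear Bäcklund relation implies the auto-Bäcklund
relation for the potentials wᵢ = 2∂ₓ log τᵢ. -/
theorem bilinear_backlund_gives_potential_backlund
    (τ₁ τ₂ : ℝ → ℝ → ℝ)
    (hτ₁ : ContDiff ℝ (⊤ : ℕ∞) fun p : ℝ × ℝ => τ₁ p.1 p.2)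
    (hτ₂ : ContDiff ℝ (⊤ : ℕ∞) fun p : ℝ × ℝ => τ₂ p.1 p.2)
    (hpos₁ : ∀ x y, 0 < τ₁ x y) (hpos₂ : ∀ x y, 0 < τ₂ x y)
    (hBT : ∀ x y,
      τ₁ x y * pX (pX τ₂) x y - 2 * pX τ₁ x y * pX τ₂ x y
        + τ₂ x y * pX (pX τ₁) x y + τ₂ x y * pY τ₁ x y - τ₁ x y * pY τ₂ x y = 0) :
    (∀ x y, pX (fun a b => 2 * pY τ₁ a b / τ₁ a b) x y
        = pY (fun a b => 2 * pX (fun c d => Real.log (τ₁ c d)) a b) x y)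
    ∧ (∀ x y, pX (fun a b => 2 * pY τ₂ a b / τ₂ a b) x y
        = pY (fun a b => 2 * pX (fun c d => Real.log (τ₂ c d)) a b) x y)
    ∧ (∀ x y, 2 * (pY τ₂ x y / τ₂ x y - pY τ₁ x y / τ₁ x y)
        = pX (fun a b => 2 * pX (fun c d => Real.log (τ₂ c d)) a b
              + 2 * pX (fun c d => Real.log (τ₁ c d)) a b) x y
          + (1/2) * (2 * pX (fun c d => Real.log (τ₂ c d)) x y
              - 2 * pX (fun c d => Real.log (τ₁ c d)) x y)^2) := by
  have h (x y : ℝ) := bilinear_backlund_gives_potential_backlund_general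
    (contDiff_infty.1 hτ₁ 2).contDiffAt (contDiff_infty.1 hτ₂ 2).contDiffAt
    (hpos₁ x y).ne' (hpos₂ x y).ne' (hBT x y)
  exact ⟨fun x y => (h x y).1, fun x y => (h x y).2.1, fun x y => (h x y).2.2⟩
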